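/- Let 𝔨 be a real Lie algebra, K₀ ⊆ 𝔨 a Lie subalgebra, and V ⊆ 𝔨 a linear subspace such that ⁅Z, Y⁆ ∈ V + K₀ for every Z ∈ K₀ and every Y ∈ V, and define K_j as in the Killing filtration. Let F : 𝔨 → 𝔨 be a Lie algebra automorphism such that F(K₀) ⊆ K₀ and F(Y) − Y ∈ K₀ for every Y ∈ V. Suppose Y ∈ 𝔨, j ≥ 0, and Z ∈ K_j are such that F(Y) − Y − Z ∈ K_{j+1}. Then for every natural number n one has Fⁿ(Y) − Y − n•Z ∈ K_{j+1}. -/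

import Mathlib

/-- The Killing filtration: `K 0 = K₀` and
`K (j+1) = {Z ∈ K₀ : ⁅Z, Y⁆ ∈ K j for all Y ∈ V}`. -/
def killingFiltration (𝔨 : Type*) [LieRing 𝔨] [LieAlgebra ℝ 𝔨]
    (K₀ : LieSubalgebra ℝ 𝔨) (V : Submodule ℝ 𝔨) : ℕ → Submodule ℝ 𝔨
  | 0 => K₀.toSubmodule
  | (j + 1) =>
    { carrier := {Z | Z ∈ K₀ ∧ ∀ Y ∈ V, ⁅Z, Y⁆ ∈ killingFiltration 𝔨 K₀ V j}
      add_mem' := by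
        rintro a b ⟨ha, ha'⟩ ⟨hb, hb'⟩
        refine ⟨K₀.add_mem ha hb, fun Y hY => ?_⟩
        rw [add_lie]
        exact (killingFiltration 𝔨 K₀ V j).add_mem (ha' Y hY) (hb' Y hY)
      zero_mem' := by
        refine ⟨K₀.zero_mem, fun Y hY => ?_⟩
        rw [zero_lie]
        exact (killingFiltration 𝔨 K₀ V j).zero_mem
      smul_mem' := by
        rintro c a ⟨ha, ha'⟩
        refine ⟨K₀.smul_mem c ha, fun Y hY => ?_⟩
        rw [smul_lie]
        exact (killingFiltration 𝔨 K₀ V j).smul_mem c (ha' Y hY) }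

/-!
Each `K_j` is an ideal of `K₀` by the Jacobi identity, and is stable under `F`. The identity
`⁅F Z - Z, Y⁆ = (F ⁅Z, Y⁆ - ⁅Z, Y⁆) - ⁅F Z, F Y - Y⁆` then shows, by induction on `j`, that `F` acts
trivially on `K_j / K_{j+1}`. Hence `F` induces a map on `𝔨 / K_{j+1}` which fixes the class of `Z`
and translates the class of `Y` by it, so its `n`-th iterate translates the class of `Y` by `n • Z`.
-/

theorem iterate_sub_nsmul_mem {M F S : Type*} [AddCommGroup M]
    [FunLike F M M] [AddMonoidHomClass F M M] [SetLike S M] [AddSubgroupClass S M]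
    {f : F} {N : S} {y z : M} (hN : ∀ x ∈ N, f x ∈ N) (hz : f z - z ∈ N)
    (hy : f y - y - z ∈ N) (n : ℕ) : f^[n] y - y - n • z ∈ N := by
  induction n with
  | zero => simp
  | succ n ih =>
    have h_split : f^[n + 1] y - y - (n + 1) • z
        = f (f^[n] y - y - n • z) + (f y - y - z) + n • (f z - z) := by
      rw [Function.iterate_succ_apply', map_sub, map_sub, map_nsmul, succ_nsmul, nsmul_sub]
      abel
    rw [h_split]
    exact add_mem (add_mem (hN _ ih) hy) (nsmul_mem hz n)

theorem map_sub_self_mem_of_mem_sup {R M : Type*} [Ring R] [AddCommGroup M] [Module R M]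
    {f : M →ₗ[R] M} {p q : Submodule R M} (hp : ∀ x ∈ p, f x - x ∈ q) (hq : ∀ x ∈ q, f x ∈ q)
    {x : M} (hx : x ∈ p ⊔ q) : f x - x ∈ q := by
  have h_sup : p ⊔ q ≤ q.comap (f - LinearMap.id) :=
    sup_le hp fun y hy => q.sub_mem (hq y hy) hy
  exact h_sup hx

theorem map_sub_self_lie {R L : Type*} [CommRing R] [LieRing L] [LieAlgebra R L]
    (F : L →ₗ⁅R⁆ L) (x y : L) :
    ⁅F x - x, y⁆ = (F ⁅x, y⁆ - ⁅x, y⁆) - ⁅F x, F y - y⁆ := by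
  rw [LieHom.map_lie, sub_lie, lie_sub]
  abel

section KillingFiltration

variable {𝔨 : Type*} [LieRing 𝔨] [LieAlgebra ℝ 𝔨] {K₀ : LieSubalgebra ℝ 𝔨} {V : Submodule ℝ 𝔨}
  {F : 𝔨 →ₗ⁅ℝ⁆ 𝔨} {j : ℕ} {W Y Z : 𝔨}

theorem mem_killingFiltration_succ :
    Z ∈ killingFiltration 𝔨 K₀ V (j + 1) ↔
      Z ∈ K₀ ∧ ∀ Y ∈ V, ⁅Z, Y⁆ ∈ killingFiltration 𝔨 K₀ V j :=
  Iff.rfl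

theorem killingFiltration_antitone : Antitone (killingFiltration 𝔨 K₀ V) := by
  refine antitone_nat_of_succ_le fun j => ?_
  induction j with
  | zero => exact fun Z hZ => (mem_killingFiltration_succ.1 hZ).1
  | succ j ih =>
    intro Z hZ
    obtain ⟨hZ₀, hZV⟩ := mem_killingFiltration_succ.1 hZ
    exact mem_killingFiltration_succ.2 ⟨hZ₀, fun Y hY => ih (hZV Y hY)⟩

theorem lie_mem_killingFiltration (hbr : ∀ Z ∈ K₀, ∀ Y ∈ V, ⁅Z, Y⁆ ∈ V ⊔ K₀.toSubmodule)
    (hZ : Z ∈ killingFiltration 𝔨 K₀ V j) (hW : W ∈ K₀) :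
    ⁅Z, W⁆ ∈ killingFiltration 𝔨 K₀ V j := by
  induction j generalizing Z W with
  | zero => exact K₀.lie_mem hZ hW
  | succ j ih =>
    have hZj : Z ∈ killingFiltration 𝔨 K₀ V j := killingFiltration_antitone j.le_succ hZ
    obtain ⟨hZ₀, hZV⟩ := mem_killingFiltration_succ.1 hZ
    have h_sup : V ⊔ K₀.toSubmodule ≤
        (killingFiltration 𝔨 K₀ V j).comap (LieAlgebra.ad ℝ 𝔨 Z) :=
      sup_le hZV fun _ hX => ih hZj hX
    refine mem_killingFiltration_succ.2 ⟨K₀.lie_mem hZ₀ hW, fun Y hY => ?_⟩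
    have h_jacobi : ⁅⁅Z, W⁆, Y⁆ = ⁅Z, ⁅W, Y⁆⁆ + ⁅⁅Z, Y⁆, W⁆ := by
      rw [lie_lie, ← lie_skew W ⁅Z, Y⁆, sub_neg_eq_add]
    rw [h_jacobi]
    exact add_mem (h_sup (hbr W hW Y hY)) (ih (hZV Y hY) hW)

theorem map_mem_killingFiltration (hbr : ∀ Z ∈ K₀, ∀ Y ∈ V, ⁅Z, Y⁆ ∈ V ⊔ K₀.toSubmodule)
    (hF0 : ∀ Z ∈ K₀, F Z ∈ K₀) (hFV : ∀ Y ∈ V, F Y - Y ∈ K₀)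
    (hZ : Z ∈ killingFiltration 𝔨 K₀ V j) : F Z ∈ killingFiltration 𝔨 K₀ V j := by
  induction j generalizing Z with
  | zero => exact hF0 Z hZ
  | succ j ih =>
    have hFZ : F Z ∈ killingFiltration 𝔨 K₀ V j := ih (killingFiltration_antitone j.le_succ hZ)
    obtain ⟨hZ₀, hZV⟩ := mem_killingFiltration_succ.1 hZ
    refine mem_killingFiltration_succ.2 ⟨hF0 Z hZ₀, fun Y hY => ?_⟩
    have h_lie : ⁅F Z, Y⁆ = F ⁅Z, Y⁆ - ⁅F Z, F Y - Y⁆ := by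
      rw [LieHom.map_lie, lie_sub, sub_sub_cancel]
    rw [h_lie]
    exact sub_mem (ih (hZV Y hY)) (lie_mem_killingFiltration hbr hFZ (hFV Y hY))

theorem map_sub_self_mem_killingFiltration_succ
    (hbr : ∀ Z ∈ K₀, ∀ Y ∈ V, ⁅Z, Y⁆ ∈ V ⊔ K₀.toSubmodule)
    (hF0 : ∀ Z ∈ K₀, F Z ∈ K₀) (hFV : ∀ Y ∈ V, F Y - Y ∈ K₀)
    (hZ : Z ∈ killingFiltration 𝔨 K₀ V j) : F Z - Z ∈ killingFiltration 𝔨 K₀ V (j + 1) := by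
  induction j generalizing Z with
  | zero =>
    refine mem_killingFiltration_succ.2 ⟨K₀.sub_mem (hF0 Z hZ) hZ, fun Y hY => ?_⟩
    rw [map_sub_self_lie]
    exact K₀.sub_mem (map_sub_self_mem_of_mem_sup (f := F) hFV hF0 (hbr Z hZ Y hY))
      (K₀.lie_mem (hF0 Z hZ) (hFV Y hY))
  | succ j ih =>
    obtain ⟨hZ₀, hZV⟩ := mem_killingFiltration_succ.1 hZ
    refine mem_killingFiltration_succ.2 ⟨K₀.sub_mem (hF0 Z hZ₀) hZ₀, fun Y hY => ?_⟩
    rw [map_sub_self_lie]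
    have hFZ : F Z ∈ killingFiltration 𝔨 K₀ V (j + 1) := map_mem_killingFiltration hbr hF0 hFV hZ
    exact sub_mem (ih (hZV Y hY)) (lie_mem_killingFiltration hbr hFZ (hFV Y hY))

theorem iterate_sub_nsmul_mem_killingFiltration_general
    (hbr : ∀ Z ∈ K₀, ∀ Y ∈ V, ⁅Z, Y⁆ ∈ V ⊔ K₀.toSubmodule)
    (hF0 : ∀ Z ∈ K₀, F Z ∈ K₀) (hFV : ∀ Y ∈ V, F Y - Y ∈ K₀)
    (hZ : Z ∈ killingFiltration 𝔨 K₀ V j)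
    (h : F Y - Y - Z ∈ killingFiltration 𝔨 K₀ V (j + 1)) (n : ℕ) :
    F^[n] Y - Y - n • Z ∈ killingFiltration 𝔨 K₀ V (j + 1) :=
  iterate_sub_nsmul_mem (fun _ => map_mem_killingFiltration hbr hF0 hFV)
    (map_sub_self_mem_killingFiltration_succ hbr hF0 hFV hZ) h n

end KillingFiltration

/-- if `F(Y) − Y − Z ∈ K_{j+1}` with `Z ∈ K_j`, then
`Fⁿ(Y) − Y − n•Z ∈ K_{j+1}` for every `n`. -/
theorem iterate_sub_nsmul_mem_killingFiltration {𝔨 : Type*} [LieRing 𝔨] [LieAlgebra ℝ 𝔨]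
    (K₀ : LieSubalgebra ℝ 𝔨) (V : Submodule ℝ 𝔨)
    (hbr : ∀ Z ∈ K₀, ∀ Y ∈ V, ⁅Z, Y⁆ ∈ V ⊔ K₀.toSubmodule)
    (F : 𝔨 ≃ₗ⁅ℝ⁆ 𝔨)
    (hF0 : ∀ Z ∈ K₀, F Z ∈ K₀)
    (hFV : ∀ Y ∈ V, F Y - Y ∈ K₀)
    (Y : 𝔨) (j : ℕ) (Z : 𝔨) (hZ : Z ∈ killingFiltration 𝔨 K₀ V j)
    (h : F Y - Y - Z ∈ killingFiltration 𝔨 K₀ V (j + 1)) :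
    ∀ n : ℕ, (⇑F)^[n] Y - Y - n • Z ∈ killingFiltration 𝔨 K₀ V (j + 1) :=
  iterate_sub_nsmul_mem_killingFiltration_general (F := F.toLieHom) hbr hF0 hFV hZ h
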